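/- Let (X,d_X) and (Y,d_Y) be Polish spaces, f a continuous semi-flow on X and g a continuous semi-flow on Y, and let h : X → Y be a homeomorphism such that h(O₊(f,x)) = O₊(g, h(x)) for every x ∈ X. Then (Y,g) is chaotic if and only if (X,f) is chaotic. -/

import Mathlib

open Filter Topology Metric Set TopologicalSpace

/-- `f` is a continuous semi-flow on `X`: jointly continuous on `[0,∞) × X`,
`f 0 x = x`, and `f s (f t x) = f (s+t) x` for `s, t ≥ 0`. -/
def IsSemiflow {X : Type*} [MetricSpace X] (f : ℝ → X → X) : Prop :=
  ContinuousOn (fun p : ℝ × X => f p.1 p.2) (Set.Ici 0 ×ˢ Set.univ) ∧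
  (∀ x, f 0 x = x) ∧
  (∀ s t : ℝ, 0 ≤ s → 0 ≤ t → ∀ x, f s (f t x) = f (s + t) x)

/-- the forward orbit `O₊(f,x) = {f t x : t ≥ 0}`. -/
def posOrbit {X : Type*} [MetricSpace X] (f : ℝ → X → X) (x : X) : Set X :=
  (fun t => f t x) '' Set.Ici (0 : ℝ)

/-- `x` is Birkhoff recurrent for `f`. -/
def BirkhoffRecurrent {X : Type*} [MetricSpace X] (f : ℝ → X → X) (x : X) : Prop :=
  ∀ ε > (0:ℝ), ∃ T > (0:ℝ), ∀ τ ≥ (0:ℝ), ∀ υ ≥ (0:ℝ),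
    ∃ t : ℝ, τ < t ∧ t < τ + T ∧ dist (f υ x) (f t x) < ε

/-- `f` is topologically quasi-transitive: some forward orbit is dense. -/
def QuasiTransitive {X : Type*} [MetricSpace X] (f : ℝ → X → X) : Prop :=
  ∃ x : X, Dense (posOrbit f x)

/-- `(X,f)` is chaotic: quasi-transitive, Birkhoff recurrent points dense, and
two motions far away from each other. -/
def Chaotic {X : Type*} [MetricSpace X] (f : ℝ → X → X) : Prop :=
  QuasiTransitive f ∧ Dense {x : X | BirkhoffRecurrent f x} ∧
  ∃ x y : X, closure (posOrbit f x) ∩ closure (posOrbit f y) = ∅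

/-!
For a semi-flow on a complete metric space, a point is Birkhoff recurrent exactly when its orbit
closure is a compact minimal set (Birkhoff): recurrence with bounded gaps makes the orbit totally
bounded and passes to every point of the orbit closure; conversely, on a compact minimal set
compactness bounds the time in which one point comes near another, uniformly in both points.
Hence all three conditions in the definition of chaos are statements about orbit closures alone,
and a homeomorphism matching the orbit closures of two semi-flows preserves them, although it
controls neither the metric nor the parametrisation of the orbits.
-/

/-- A compact minimal set of `f`: a nonempty compact set in which every point has an orbit whose
closure is the whole set. Invariance under `f` is part of the last condition. -/
structure IsCompactMinimalSet {X : Type*} [MetricSpace X] (f : ℝ → X → X) (K : Set X) : Prop where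
  nonempty : K.Nonempty
  isCompact : IsCompact K
  closure_posOrbit_eq : ∀ x ∈ K, closure (posOrbit f x) = K

section Semiflow

variable {X : Type*} [MetricSpace X] {f : ℝ → X → X} {K : Set X} {x y z : X} {t ε : ℝ}

lemma mem_posOrbit (f : ℝ → X → X) (x : X) (ht : 0 ≤ t) : f t x ∈ posOrbit f x :=
  ⟨t, ht, rfl⟩

lemma IsCompactMinimalSet.apply_mem (hK : IsCompactMinimalSet f K) (hx : x ∈ K) (ht : 0 ≤ t) :
    f t x ∈ K :=
  hK.closure_posOrbit_eq x hx ▸ subset_closure (mem_posOrbit f x ht)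

namespace IsSemiflow

lemma continuousOn_time (hf : IsSemiflow f) (x : X) : ContinuousOn (fun t => f t x) (Ici 0) :=
  hf.1.comp (f := fun t => (t, x)) (by fun_prop) fun _ ht => ⟨ht, mem_univ x⟩

lemma continuous_apply (hf : IsSemiflow f) (ht : 0 ≤ t) : Continuous (f t) :=
  hf.1.comp_continuous (f := fun x => (t, x)) (by fun_prop) fun x => ⟨ht, mem_univ x⟩

lemma mapsTo_closure_posOrbit (hf : IsSemiflow f) (ht : 0 ≤ t) :
    MapsTo (f t) (closure (posOrbit f x)) (closure (posOrbit f x)) := by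
  refine MapsTo.closure ?_ (hf.continuous_apply ht)
  rintro _ ⟨s, hs, rfl⟩
  exact ⟨t + s, add_nonneg ht hs, (hf.2.2 t s ht hs x).symm⟩

lemma closure_posOrbit_subset (hf : IsSemiflow f) (hy : y ∈ closure (posOrbit f x)) :
    closure (posOrbit f y) ⊆ closure (posOrbit f x) := by
  refine closure_minimal ?_ isClosed_closure
  rintro _ ⟨t, ht, rfl⟩
  exact hf.mapsTo_closure_posOrbit ht hy

lemma isClosed_setOf_exists_apply_mem (hf : IsSemiflow f) {S : Set ℝ} (hS : IsCompact S)
    (hS₀ : S ⊆ Ici 0) {A : Set X} (hA : IsClosed A) : IsClosed {y | ∃ s ∈ S, f s y ∈ A} := by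
  have : CompactSpace S := isCompact_iff_compactSpace.1 hS
  have hcont : Continuous fun p : S × X => f p.1 p.2 :=
    hf.1.comp_continuous (f := fun p : S × X => ((p.1 : ℝ), p.2)) (by fun_prop)
      fun p => ⟨hS₀ p.1.2, mem_univ _⟩
  convert isClosedMap_snd_of_compactSpace _ (hA.preimage hcont) using 1
  ext y
  simp

end IsSemiflow

lemma IsCompactMinimalSet.exists_pos_dist_lt (hf : IsSemiflow f) (hK : IsCompactMinimalSet f K)
    (hy : y ∈ K) (hz : z ∈ K) (hε : 0 < ε) : ∃ t > 0, dist z (f t y) < ε := by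
  -- Starting from `f 1 y` instead of `y` makes the hitting time strictly positive.
  rw [← hK.closure_posOrbit_eq _ (hK.apply_mem hy zero_le_one)] at hz
  obtain ⟨_, ⟨s, hs, rfl⟩, hdist⟩ := Metric.mem_closure_iff.1 hz ε hε
  refine ⟨s + 1, add_pos_of_nonneg_of_pos hs one_pos, ?_⟩
  rwa [← hf.2.2 s 1 hs zero_le_one]

lemma IsCompactMinimalSet.exists_uniform_time_dist_lt (hf : IsSemiflow f)
    (hK : IsCompactMinimalSet f K) (hε : 0 < ε) :
    ∃ T > 0, ∀ y ∈ K, ∀ z ∈ K, ∃ t ∈ Ioo 0 T, dist z (f t y) < ε := by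
  let V : ℕ → Set (X × X) := fun n => ⋃ t ∈ Ioo (0 : ℝ) (n + 1), {p | dist p.2 (f t p.1) < ε}
  have hV_open (n : ℕ) : IsOpen (V n) := isOpen_biUnion fun t ht => by
    have := hf.continuous_apply ht.1.le
    exact isOpen_lt (by fun_prop) continuous_const
  have hV_mono : Monotone V := fun m n hmn =>
    biUnion_subset_biUnion_left (Ioo_subset_Ioo_right (by gcongr))
  have hV_cover : K ×ˢ K ⊆ ⋃ n, V n := by
    rintro ⟨y, z⟩ ⟨hy, hz⟩
    obtain ⟨t, ht, hdist⟩ := hK.exists_pos_dist_lt hf hy hz hε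
    obtain ⟨n, hn⟩ := exists_nat_gt t
    exact mem_iUnion.2 ⟨n, mem_iUnion₂.2 ⟨t, ⟨ht, by linarith⟩, hdist⟩⟩
  obtain ⟨n, hn⟩ :=
    (hK.isCompact.prod hK.isCompact).elim_directed_cover V hV_open hV_cover hV_mono.directed_le
  refine ⟨n + 1, by positivity, fun y hy z hz => ?_⟩
  obtain ⟨t, ht, hdist⟩ := mem_iUnion₂.1 (hn (mk_mem_prod hy hz))
  exact ⟨t, ht, hdist⟩

lemma IsCompactMinimalSet.birkhoffRecurrent (hf : IsSemiflow f) (hK : IsCompactMinimalSet f K)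
    (hx : x ∈ K) : BirkhoffRecurrent f x := by
  intro ε hε
  obtain ⟨T, hT, hit⟩ := hK.exists_uniform_time_dist_lt hf hε
  refine ⟨T, hT, fun τ hτ υ hυ => ?_⟩
  obtain ⟨t, ht, hdist⟩ := hit _ (hK.apply_mem hx hτ) _ (hK.apply_mem hx hυ)
  refine ⟨t + τ, by linarith [ht.1], by linarith [ht.2], ?_⟩
  rwa [← hf.2.2 t τ ht.1.le hτ]

namespace BirkhoffRecurrent

lemma totallyBounded_posOrbit (hf : IsSemiflow f) (hx : BirkhoffRecurrent f x) :
    TotallyBounded (posOrbit f x) := by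
  refine Metric.totallyBounded_iff.2 fun ε hε => ?_
  obtain ⟨T, -, hT⟩ := hx (ε / 2) (half_pos hε)
  have harc : IsCompact ((fun t => f t x) '' Icc 0 T) :=
    isCompact_Icc.image_of_continuousOn ((hf.continuousOn_time x).mono Icc_subset_Ici_self)
  obtain ⟨s, hs, hcover⟩ := Metric.totallyBounded_iff.1 harc.totallyBounded (ε / 2) (half_pos hε)
  refine ⟨s, hs, ?_⟩
  rintro _ ⟨υ, hυ, rfl⟩
  obtain ⟨t, ht₀, htT, hdist⟩ := hT 0 le_rfl υ hυ
  rw [zero_add] at htT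
  obtain ⟨c, hc, hball⟩ := mem_iUnion₂.1 (hcover ⟨t, ⟨ht₀.le, htT.le⟩, rfl⟩)
  refine mem_iUnion₂.2 ⟨c, hc, ?_⟩
  calc dist (f υ x) c ≤ dist (f υ x) (f t x) + dist (f t x) c := dist_triangle _ _ _
    _ < ε / 2 + ε / 2 := add_lt_add hdist hball
    _ = ε := add_halves ε

lemma apply_mem_closure_posOrbit (hf : IsSemiflow f) (hx : BirkhoffRecurrent f x)
    (hy : y ∈ closure (posOrbit f x)) (ht : 0 ≤ t) : f t x ∈ closure (posOrbit f y) := by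
  refine Metric.mem_closure_iff.2 fun ε hε => ?_
  obtain ⟨T, -, hT⟩ := hx (ε / 2) (half_pos hε)
  -- The gap bound `T` makes approaching `f t x` a closed condition on the starting point.
  have hclosed : IsClosed {w | ∃ s ∈ Icc 0 T, f s w ∈ closedBall (f t x) (ε / 2)} :=
    hf.isClosed_setOf_exists_apply_mem isCompact_Icc Icc_subset_Ici_self isClosed_closedBall
  have horbit : posOrbit f x ⊆ {w | ∃ s ∈ Icc 0 T, f s w ∈ closedBall (f t x) (ε / 2)} := by
    rintro _ ⟨τ, hτ, rfl⟩
    obtain ⟨r, hτr, hrT, hdist⟩ := hT τ hτ t ht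
    refine ⟨r - τ, ⟨by linarith, by linarith⟩, ?_⟩
    rw [hf.2.2 _ _ (by linarith) hτ, sub_add_cancel, mem_closedBall']
    exact hdist.le
  obtain ⟨s, hs, hball⟩ := closure_minimal horbit hclosed hy
  exact ⟨f s y, mem_posOrbit f y hs.1, (mem_closedBall'.1 hball).trans_lt (half_lt_self hε)⟩

lemma closure_posOrbit_eq (hf : IsSemiflow f) (hx : BirkhoffRecurrent f x)
    (hy : y ∈ closure (posOrbit f x)) : closure (posOrbit f y) = closure (posOrbit f x) := by
  refine (hf.closure_posOrbit_subset hy).antisymm (closure_minimal ?_ isClosed_closure)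
  rintro _ ⟨t, ht, rfl⟩
  exact hx.apply_mem_closure_posOrbit hf hy ht

lemma isCompactMinimalSet [CompleteSpace X] (hf : IsSemiflow f) (hx : BirkhoffRecurrent f x) :
    IsCompactMinimalSet f (closure (posOrbit f x)) where
  nonempty := ⟨f 0 x, subset_closure (mem_posOrbit f x le_rfl)⟩
  isCompact := (hx.totallyBounded_posOrbit hf).closure.isCompact_of_isClosed isClosed_closure
  closure_posOrbit_eq _ hy := hx.closure_posOrbit_eq hf hy

end BirkhoffRecurrent

end Semiflow

section OrbitClosures

variable {X Y : Type*} [MetricSpace X] [MetricSpace Y] {f : ℝ → X → X} {g : ℝ → Y → Y} {h : X → Y}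

lemma IsCompactMinimalSet.image {K : Set X} (hK : IsCompactMinimalSet f K) (hh : Continuous h)
    (hcl : ∀ x, h '' closure (posOrbit f x) = closure (posOrbit g (h x))) :
    IsCompactMinimalSet g (h '' K) where
  nonempty := hK.nonempty.image h
  isCompact := hK.isCompact.image hh
  closure_posOrbit_eq := by
    rintro _ ⟨x, hx, rfl⟩
    rw [← hcl, hK.closure_posOrbit_eq x hx]

lemma BirkhoffRecurrent.map [CompleteSpace X] (hf : IsSemiflow f) (hg : IsSemiflow g)
    (hh : Continuous h) (hcl : ∀ x, h '' closure (posOrbit f x) = closure (posOrbit g (h x)))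
    {x : X} (hx : BirkhoffRecurrent f x) : BirkhoffRecurrent g (h x) := by
  have hx_mem : x ∈ closure (posOrbit f x) := subset_closure ⟨0, self_mem_Ici, hf.2.1 x⟩
  exact ((hx.isCompactMinimalSet hf).image hh hcl).birkhoffRecurrent hg (mem_image_of_mem h hx_mem)

lemma QuasiTransitive.map (hh : Continuous h) (hrange : DenseRange h)
    (hcl : ∀ x, h '' closure (posOrbit f x) = closure (posOrbit g (h x)))
    (htrans : QuasiTransitive f) : QuasiTransitive g := by
  obtain ⟨x, hx⟩ := htrans
  refine ⟨h x, dense_closure.1 ?_⟩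
  rw [← hcl]
  exact hrange.dense_image hh hx.closure

lemma Chaotic.map [CompleteSpace X] (hf : IsSemiflow f) (hg : IsSemiflow g)
    (hh : Continuous h) (hinj : Function.Injective h) (hrange : DenseRange h)
    (hcl : ∀ x, h '' closure (posOrbit f x) = closure (posOrbit g (h x)))
    (hchaos : Chaotic f) : Chaotic g := by
  obtain ⟨htrans, hrec, a, b, hab⟩ := hchaos
  refine ⟨htrans.map hh hrange hcl, ?_, h a, h b, ?_⟩
  · refine (hrange.dense_image hh hrec).mono (image_subset_iff.2 fun x hx => ?_)
    exact BirkhoffRecurrent.map hf hg hh hcl hx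
  · rw [← hcl, ← hcl, ← image_inter hinj, hab, image_empty]

end OrbitClosures

theorem chaotic_invariant_under_topological_equivalence_general {X Y : Type*}
    [MetricSpace X] [CompleteSpace X] [MetricSpace Y] [CompleteSpace Y]
    (f : ℝ → X → X) (hf : IsSemiflow f) (g : ℝ → Y → Y) (hg : IsSemiflow g) (h : X ≃ₜ Y)
    (hcl : ∀ x, h '' closure (posOrbit f x) = closure (posOrbit g (h x))) :
    Chaotic g ↔ Chaotic f := by
  have hcl_symm (y : Y) : h.symm '' closure (posOrbit g y) = closure (posOrbit f (h.symm y)) := by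
    obtain ⟨x, rfl⟩ := h.surjective y
    rw [← hcl, h.symm_apply_apply, h.image_symm, h.preimage_image]
  exact ⟨Chaotic.map hg hf h.symm.continuous h.symm.injective h.symm.surjective.denseRange hcl_symm,
    Chaotic.map hf hg h.continuous h.injective h.surjective.denseRange hcl⟩

/-- chaos is invariant under topological equivalence of
semi-flows. -/
theorem chaotic_invariant_under_topological_equivalence {X Y : Type*}
    [MetricSpace X] [CompleteSpace X] [SeparableSpace X]
    [MetricSpace Y] [CompleteSpace Y] [SeparableSpace Y]
    (f : ℝ → X → X) (hf : IsSemiflow f) (g : ℝ → Y → Y) (hg : IsSemiflow g)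
    (h : X ≃ₜ Y) (horb : ∀ x : X, h '' posOrbit f x = posOrbit g (h x)) :
    Chaotic g ↔ Chaotic f :=
  chaotic_invariant_under_topological_equivalence_general f hf g hg h fun x => by
    rw [h.image_closure, horb]
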